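/- For every probability mass function P on a finite set 𝒳×𝒴, the leakage of the primitive P is at least the leakage of the primitive given by its pair of dependent parts: Δ_{P_{X,Y}} ≥ Δ_{P_{X↘Y, Y↘X}}, where P_{X↘Y,Y↘X} is the joint distribution of (f_X(X), f_Y(Y)) for (X,Y) ~ P. -/

import Mathlib

open scoped BigOperators
open Matrix
open scoped ComplexOrder

attribute [local instance 10] Classical.propDecidable

noncomputable section

/-- Base-2 Shannon entropy of a finitely supported real function. -/
def shannonEntropy {α : Type*} [Fintype α] (p : α → ℝ) : ℝ :=
  -∑ x, p x * Real.logb 2 (p x)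

/-- Von Neumann entropy: base-2 Shannon entropy of the eigenvalue multiset. -/
def vonNeumannEntropy {n : Type*} [Fintype n] [DecidableEq n] (ρ : Matrix n n ℂ) : ℝ :=
  if h : ρ.IsHermitian then shannonEntropy h.eigenvalues else 0

/-- Rank-one outer product `|φ⟩⟨φ|`. -/
def outer {n : Type*} (φ : n → ℂ) : Matrix n n ℂ :=
  fun i j => φ i * (starRingEnd ℂ) (φ j)

/-- Partial trace over the first tensor factor. -/
def trLeft {m n : Type*} [Fintype m] (ρ : Matrix (m × n) (m × n) ℂ) : Matrix n n ℂ :=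
  fun i j => ∑ a, ρ (a, i) (a, j)

section primitives

variable {𝒰 𝒱 : Type*} [Fintype 𝒰] [Fintype 𝒱] [DecidableEq 𝒰] [DecidableEq 𝒱]

def margX (Q : 𝒰 × 𝒱 → ℝ) (u : 𝒰) : ℝ := ∑ v, Q (u, v)

def margY (Q : 𝒰 × 𝒱 → ℝ) (v : 𝒱) : ℝ := ∑ u, Q (u, v)

/-- Classical base-2 mutual information `I(U;V) = H(U) + H(V) − H(U,V)`. -/
def mutualInfo (Q : 𝒰 × 𝒱 → ℝ) : ℝ :=
  shannonEntropy (margX Q) + shannonEntropy (margY Q) - shannonEntropy Q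

/-- The regular embedding `|ψ_θ⟩ = Σ_{u,v} e^{iθ(u,v)} √Q(u,v) |u⟩⊗|v⟩` of `Q`. -/
def regEmbed (Q : 𝒰 × 𝒱 → ℝ) (θ : 𝒰 × 𝒱 → ℝ) : 𝒰 × 𝒱 → ℂ :=
  fun p => Complex.exp ((θ p : ℂ) * Complex.I) * (Real.sqrt (Q p) : ℂ)

/-- The leakage `Δ(ψ_θ) = S(tr_first |ψ_θ⟩⟨ψ_θ|) − I(U;V)` of the regular embedding. -/
def regLeakage (Q : 𝒰 × 𝒱 → ℝ) (θ : 𝒰 × 𝒱 → ℝ) : ℝ :=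
  vonNeumannEntropy (trLeft (outer (regEmbed Q θ))) - mutualInfo Q

/-- The leakage of the primitive `Q`: the minimal leakage over all regular embeddings. -/
def primLeakage (Q : 𝒰 × 𝒱 → ℝ) : ℝ := ⨅ θ : 𝒰 × 𝒱 → ℝ, regLeakage Q θ

end primitives

variable {𝒳 𝒴 : Type*} [Fintype 𝒳] [Fintype 𝒴] [DecidableEq 𝒳] [DecidableEq 𝒴]

/-- `f_X(x) = P_{Y|X=x}`, the dependent-part map of `X` w.r.t. `Y`. -/
def condYX (P : 𝒳 × 𝒴 → ℝ) (x : 𝒳) : 𝒴 → ℝ := fun y => P (x, y) / margX P x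

/-- `f_Y(y) = P_{X|Y=y}`, the dependent-part map of `Y` w.r.t. `X`. -/
def condXY (P : 𝒳 × 𝒴 → ℝ) (y : 𝒴) : 𝒳 → ℝ := fun x => P (x, y) / margY P y

/-- The joint distribution of the pair of dependent parts `(X↘Y, Y↘X) = (f_X(X), f_Y(Y))`,
supported on the (finite) images of `f_X` and `f_Y`. -/
def depPartDist (P : 𝒳 × 𝒴 → ℝ) :
    {u // u ∈ Finset.univ.image (condYX P)} × {v // v ∈ Finset.univ.image (condXY P)} → ℝ :=
  fun q => ∑ p ∈ Finset.univ.filter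
      (fun p : 𝒳 × 𝒴 => condYX P p.1 = q.1.1 ∧ condXY P p.2 = q.2.1), P p

/-!
Write `P (x, y) = a x * k (f x) y`; for the dependent part `f = f_X` this holds with `a` the
marginal and `k (f x)` the conditional distribution. The embedding of `P` has rows `√(a x)` times
vectors with weights `k (f x)`, so for each value `u` of `f` the rows with `f x = u` contribute to
the reduced state a nonnegative combination of pure states that all have diagonal `k u`. This lies
in the convex hull of the pure states available to the merged row at `u`. Convex hulls commute
with Minkowski sums, so the reduced state of any embedding of `P` is a mixture of reduced states
of embeddings of the merged primitive, and by concavity of the von Neumann entropy one of these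
has no larger entropy. Mutual information is unchanged by merging proportional rows. Columns
reduce to rows by swapping the two parties, because `M Mᴴ` and `(Mᴴ M)ᵀ` have the same entropy.
-/

section Spectral

open scoped InnerProductSpace

variable {𝕜 E ι κ : Type*} [RCLike 𝕜] [NormedAddCommGroup E] [InnerProductSpace 𝕜 E]
  [Fintype ι] [Fintype κ]

lemma re_inner_apply_eq_sum_norm_sq_mul (e : OrthonormalBasis ι 𝕜 E) {T : E →ₗ[𝕜] E} {l : ι → ℝ}
    (hT : ∀ j, T (e j) = (l j : 𝕜) • e j) (v : E) :
    RCLike.re ⟪v, T v⟫_𝕜 = ∑ j, ‖⟪e j, v⟫_𝕜‖ ^ 2 * l j := by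
  have hTv : T v = ∑ j, ⟪e j, v⟫_𝕜 • (l j : 𝕜) • e j := by
    conv_lhs => rw [← e.sum_repr' v]
    simp only [map_sum, map_smul, hT]
  rw [hTv, inner_sum, map_sum]
  refine Finset.sum_congr rfl fun j _ => ?_
  rw [inner_smul_right, inner_smul_right, mul_left_comm, RCLike.re_ofReal_mul,
    inner_mul_symm_re_eq_norm, norm_mul, norm_inner_symm v, ← sq, mul_comm]

/-- **Peierls' inequality**: the matrix `‖⟪e j, b i⟫‖ ^ 2` is doubly stochastic, so Jensen's
inequality applies in each row. -/
lemma sum_map_eigenvalues_le_sum_map_re_inner {s : Set ℝ} {f : ℝ → ℝ} (hf : ConcaveOn ℝ s f)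
    (e : OrthonormalBasis ι 𝕜 E) {T : E →ₗ[𝕜] E} {l : ι → ℝ}
    (hT : ∀ j, T (e j) = (l j : 𝕜) • e j) (hl : ∀ j, l j ∈ s) (b : OrthonormalBasis κ 𝕜 E) :
    ∑ j, f (l j) ≤ ∑ i, f (RCLike.re ⟪b i, T (b i)⟫_𝕜) := by
  have hrow (i : κ) : ∑ j, ‖⟪e j, b i⟫_𝕜‖ ^ 2 = 1 := by simp [e.sum_sq_norm_inner_right]
  have hcol (j : ι) : ∑ i, ‖⟪e j, b i⟫_𝕜‖ ^ 2 = 1 := by simp [b.sum_sq_norm_inner_left]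
  calc ∑ j, f (l j)
      = ∑ i, ∑ j, ‖⟪e j, b i⟫_𝕜‖ ^ 2 • f (l j) := by
        rw [Finset.sum_comm]
        simp only [← Finset.sum_smul, hcol, one_smul]
    _ ≤ ∑ i, f (RCLike.re ⟪b i, T (b i)⟫_𝕜) := Finset.sum_le_sum fun i _ => by
        rw [re_inner_apply_eq_sum_norm_sq_mul e hT]
        exact hf.le_map_sum (fun j _ => by positivity) (hrow i) fun j _ => hl j

variable {m n R : Type*} [Fintype m] [Fintype n] [DecidableEq m] [DecidableEq n]

lemma toEuclideanLin_eigenvectorBasis {A : Matrix n n 𝕜} (hA : A.IsHermitian) (j : n) :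
    toEuclideanLin A (hA.eigenvectorBasis j) =
      (hA.eigenvalues j : 𝕜) • hA.eigenvectorBasis j := by
  ext i
  simpa [RCLike.real_smul_eq_coe_mul] using congrFun (hA.mulVec_eigenvectorBasis j) i

open Polynomial in
lemma sum_map_roots_charpoly_mul_comm [CommRing R] [IsDomain R] {M : Type*} [AddCommMonoid M]
    {g : R → M} (hg : g 0 = 0) (A : Matrix m n R) (B : Matrix n m R) :
    ((A * B).charpoly.roots.map g).sum = ((B * A).charpoly.roots.map g).sum := by
  have hX (k : ℕ) {p : R[X]} (hp : p.Monic) : ((X ^ k * p).roots.map g).sum =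
      (p.roots.map g).sum := by
    rw [roots_mul ((monic_X_pow k).mul hp).ne_zero, roots_X_pow]
    simp only [Multiset.map_add, Multiset.sum_add, Multiset.map_nsmul, Multiset.sum_nsmul,
      Multiset.map_singleton, Multiset.sum_singleton, hg, smul_zero, zero_add]
  rw [← hX (Fintype.card n) (charpoly_monic _), charpoly_mul_comm', hX _ (charpoly_monic _)]

end Spectral

section Entropy

variable {m n : Type*} [Fintype m] [Fintype n]

lemma shannonEntropy_eq_sum_negMulLog (p : n → ℝ) :
    shannonEntropy p = (∑ x, Real.negMulLog (p x)) / Real.log 2 := by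
  simp only [shannonEntropy, Real.logb, Real.negMulLog, ← Finset.sum_neg_distrib, Finset.sum_div]
  exact Finset.sum_congr rfl fun x _ => by ring

lemma shannonEntropy_comp_equiv (e : m ≃ n) (p : n → ℝ) :
    shannonEntropy (p ∘ e) = shannonEntropy p :=
  congrArg Neg.neg (e.sum_comp fun x => p x * Real.logb 2 (p x))

lemma concaveOn_shannonEntropy : ConcaveOn ℝ {p : n → ℝ | 0 ≤ p} shannonEntropy := by
  refine ⟨convex_Ici 0, fun p hp q hq a b ha hb hab => ?_⟩
  simp only [shannonEntropy_eq_sum_negMulLog, smul_eq_mul, mul_div_assoc', ← add_div,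
    Finset.mul_sum, ← Finset.sum_add_distrib]
  refine div_le_div_of_nonneg_right (Finset.sum_le_sum fun x _ => ?_)
    (Real.log_nonneg one_le_two)
  exact Real.concaveOn_negMulLog.2 (hp x) (hq x) ha hb hab

lemma negMulLog_sum_le_sum_negMulLog {p : n → ℝ} (hp : 0 ≤ p) :
    Real.negMulLog (∑ x, p x) ≤ ∑ x, Real.negMulLog (p x) := by
  simp only [Real.negMulLog, neg_mul, Finset.sum_neg_distrib, neg_le_neg_iff, Finset.sum_mul]
  refine Finset.sum_le_sum fun x _ => ?_
  rcases (hp x).eq_or_lt with h0 | hpos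
  · simp [← h0]
  · have hle : p x ≤ ∑ y, p y := Finset.single_le_sum (fun y _ => hp y) (Finset.mem_univ x)
    exact mul_le_mul_of_nonneg_left (Real.log_le_log hpos hle) hpos.le

variable [DecidableEq n]

lemma vonNeumannEntropy_eq_sum_roots {A : Matrix n n ℂ} (hA : A.IsHermitian) :
    vonNeumannEntropy A =
      (A.charpoly.roots.map fun z => Real.negMulLog z.re).sum / Real.log 2 := by
  rw [vonNeumannEntropy, dif_pos hA, shannonEntropy_eq_sum_negMulLog,
    hA.roots_charpoly_eq_eigenvalues, Multiset.map_map]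
  rfl

lemma vonNeumannEntropy_transpose {A : Matrix n n ℂ} (hA : A.IsHermitian) :
    vonNeumannEntropy Aᵀ = vonNeumannEntropy A := by
  rw [vonNeumannEntropy_eq_sum_roots hA, vonNeumannEntropy_eq_sum_roots hA.transpose,
    charpoly_transpose]

lemma vonNeumannEntropy_conjTranspose_mul_self [DecidableEq m] (A : Matrix m n ℂ) :
    vonNeumannEntropy (Aᴴ * A) = vonNeumannEntropy (A * Aᴴ) := by
  rw [vonNeumannEntropy_eq_sum_roots (isHermitian_conjTranspose_mul_self A),
    vonNeumannEntropy_eq_sum_roots (isHermitian_mul_conjTranspose_self A),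
    sum_map_roots_charpoly_mul_comm (by simp)]

lemma negMulLog_trace_div_le_vonNeumannEntropy {A : Matrix n n ℂ} (hA : A.PosSemidef) :
    Real.negMulLog A.trace.re / Real.log 2 ≤ vonNeumannEntropy A := by
  have htrace : A.trace.re = ∑ i, hA.1.eigenvalues i := by
    simp [hA.1.trace_eq_sum_eigenvalues]
  rw [vonNeumannEntropy, dif_pos hA.1, shannonEntropy_eq_sum_negMulLog, htrace]
  exact div_le_div_of_nonneg_right (negMulLog_sum_le_sum_negMulLog hA.eigenvalues_nonneg)
    (Real.log_nonneg one_le_two)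

/-- The weights `⟨bᵢ|A|bᵢ⟩` of the outcomes when `A` is measured in the orthonormal basis `b`. -/
def outcomeWeights (b : OrthonormalBasis m ℂ (EuclideanSpace ℂ n)) (A : Matrix n n ℂ) (i : m) : ℝ :=
  RCLike.re (inner ℂ (b i) (toEuclideanLin A (b i)))

lemma outcomeWeights_nonneg (b : OrthonormalBasis m ℂ (EuclideanSpace ℂ n)) {A : Matrix n n ℂ}
    (hA : A.PosSemidef) : 0 ≤ outcomeWeights b A :=
  fun i => (isPositive_toEuclideanLin_iff.mpr hA).re_inner_nonneg_right (b i)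

lemma outcomeWeights_add_smul (b : OrthonormalBasis m ℂ (EuclideanSpace ℂ n)) (c d : ℝ)
    (A B : Matrix n n ℂ) :
    outcomeWeights b (c • A + d • B) = c • outcomeWeights b A + d • outcomeWeights b B := by
  ext i
  simp [outcomeWeights, ← Complex.coe_smul]

lemma outcomeWeights_eigenvectorBasis {A : Matrix n n ℂ} (hA : A.IsHermitian) :
    outcomeWeights hA.eigenvectorBasis A = hA.eigenvalues := by
  ext i
  simp [outcomeWeights, toEuclideanLin_eigenvectorBasis]

lemma vonNeumannEntropy_le_shannonEntropy_outcomeWeights {A : Matrix n n ℂ} (hA : A.PosSemidef)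
    (b : OrthonormalBasis m ℂ (EuclideanSpace ℂ n)) :
    vonNeumannEntropy A ≤ shannonEntropy (outcomeWeights b A) := by
  rw [vonNeumannEntropy, dif_pos hA.1, shannonEntropy_eq_sum_negMulLog,
    shannonEntropy_eq_sum_negMulLog]
  exact div_le_div_of_nonneg_right
    (sum_map_eigenvalues_le_sum_map_re_inner Real.concaveOn_negMulLog hA.1.eigenvectorBasis
      (toEuclideanLin_eigenvectorBasis hA.1) hA.eigenvalues_nonneg b)
    (Real.log_nonneg one_le_two)

lemma concaveOn_vonNeumannEntropy :
    ConcaveOn ℝ {A : Matrix n n ℂ | A.PosSemidef} vonNeumannEntropy := by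
  have hconvex : Convex ℝ {A : Matrix n n ℂ | A.PosSemidef} :=
    fun A hA B hB a b ha hb _ => (hA.smul ha).add (hB.smul hb)
  refine ⟨hconvex, fun A hA B hB a b ha hb hab => ?_⟩
  have hC : (a • A + b • B).PosSemidef := hconvex hA hB ha hb hab
  let e := hC.1.eigenvectorBasis
  calc a • vonNeumannEntropy A + b • vonNeumannEntropy B
      ≤ a • shannonEntropy (outcomeWeights e A) + b • shannonEntropy (outcomeWeights e B) := by
        gcongr <;> exact vonNeumannEntropy_le_shannonEntropy_outcomeWeights ‹_› e
    _ ≤ shannonEntropy (a • outcomeWeights e A + b • outcomeWeights e B) :=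
        concaveOn_shannonEntropy.2 (outcomeWeights_nonneg e hA) (outcomeWeights_nonneg e hB)
          ha hb hab
    _ = vonNeumannEntropy (a • A + b • B) := by
        rw [← outcomeWeights_add_smul, outcomeWeights_eigenvectorBasis, vonNeumannEntropy,
          dif_pos hC.1]

end Entropy

section PureStates

open scoped Pointwise

lemma sum_smul_mem_sum_smul {𝕜 E ι : Type*} [Field 𝕜] [LinearOrder 𝕜] [IsStrictOrderedRing 𝕜]
    [AddCommGroup E] [Module 𝕜 E] {t : Set E} (ht : Convex 𝕜 t) (hne : t.Nonempty)
    {s : Finset ι} {a : ι → 𝕜} {z : ι → E} (ha : ∀ x ∈ s, 0 ≤ a x) (hz : ∀ x ∈ s, z x ∈ t) :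
    ∑ x ∈ s, a x • z x ∈ (∑ x ∈ s, a x) • t := by
  induction s using Finset.induction_on with
  | empty => simp [Set.zero_smul_set hne]
  | insert x s hx ih =>
    simp only [Finset.forall_mem_insert] at ha hz
    rw [Finset.sum_insert hx, Finset.sum_insert hx, ht.add_smul ha.1 (Finset.sum_nonneg ha.2)]
    exact Set.add_mem_add (Set.smul_mem_smul_set hz.1) (ih ha.2 hz.2)

variable {m n : Type*}

/-- The vector with weights `p` and phases `φ`: a row of a regular embedding, and also the whole
regular embedding `regEmbed p φ`. -/
def phaseVec (p φ : n → ℝ) : n → ℂ :=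
  fun i => Complex.exp ((φ i : ℂ) * Complex.I) * (Real.sqrt (p i) : ℂ)

/-- The pure states `|ψ⟩⟨ψ|`, over all choices of phases, of the vectors `ψ` with weights `p`. -/
def phaseStates (p : n → ℝ) : Set (Matrix n n ℂ) :=
  Set.range fun φ => outer (phaseVec p φ)

lemma phaseStates_nonempty (p : n → ℝ) : (phaseStates p).Nonempty :=
  Set.range_nonempty _

lemma outer_phaseVec_smul {c : ℝ} (hc : 0 ≤ c) (p φ : n → ℝ) :
    outer (phaseVec (c • p) φ) = c • outer (phaseVec p φ) := by
  have hsq : (√c : ℂ) * √c = c := by exact_mod_cast Real.mul_self_sqrt hc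
  ext i j
  simp only [outer, phaseVec, Pi.smul_apply, smul_eq_mul, Real.sqrt_mul hc, Complex.ofReal_mul,
    map_mul, Complex.conj_ofReal, Matrix.smul_apply, Complex.real_smul, ← hsq]
  ring

lemma phaseStates_smul {c : ℝ} (hc : 0 ≤ c) (p : n → ℝ) :
    phaseStates (c • p) = c • phaseStates p := by
  simp only [phaseStates, outer_phaseVec_smul hc, ← Set.image_smul, ← Set.range_comp']

lemma sum_outer_phaseVec_smul_mem_convexHull {s : Finset m} {a : m → ℝ} (ha : ∀ x ∈ s, 0 ≤ a x)
    (p : n → ℝ) (φ : m → n → ℝ) :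
    ∑ x ∈ s, outer (phaseVec (a x • p) (φ x)) ∈
      convexHull ℝ (phaseStates ((∑ x ∈ s, a x) • p)) := by
  rw [phaseStates_smul (Finset.sum_nonneg ha), convexHull_smul,
    Finset.sum_congr rfl fun x hx => outer_phaseVec_smul (ha x hx) p (φ x)]
  exact sum_smul_mem_sum_smul (convex_convexHull ℝ _) (phaseStates_nonempty p).convexHull ha
    fun x _ => subset_convexHull ℝ _ ⟨φ x, rfl⟩

variable [Fintype m]

lemma trLeft_outer_eq_sum (ψ : m × n → ℂ) :
    trLeft (outer ψ) = ∑ x, outer fun y => ψ (x, y) := by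
  ext i j
  simp [trLeft, outer, Matrix.sum_apply]

lemma trLeft_outer_eq_mul_conjTranspose (ψ : m × n → ℂ) :
    trLeft (outer ψ) = (of fun y x => ψ (x, y)) * (of fun y x => ψ (x, y))ᴴ := by
  ext i j
  simp [trLeft, outer, mul_apply]

lemma posSemidef_trLeft_outer [Finite n] (ψ : m × n → ℂ) : (trLeft (outer ψ)).PosSemidef := by
  rw [trLeft_outer_eq_mul_conjTranspose]
  exact posSemidef_self_mul_conjTranspose _

/-- The states that the second party can hold in a regular embedding of `Q`. -/
def reducedStates (Q : m × n → ℝ) : Set (Matrix n n ℂ) :=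
  Set.range fun θ => trLeft (outer (regEmbed Q θ))

lemma reducedStates_eq_sum_phaseStates (Q : m × n → ℝ) :
    reducedStates Q = ∑ x, phaseStates fun y => Q (x, y) := by
  ext A
  simp only [reducedStates, phaseStates, Set.mem_fintype_sum, Set.mem_range]
  constructor
  · rintro ⟨θ, rfl⟩
    exact ⟨_, fun x => ⟨fun y => θ (x, y), rfl⟩, (trLeft_outer_eq_sum (regEmbed Q θ)).symm⟩
  · rintro ⟨B, hB, rfl⟩
    choose φ hφ using hB
    exact ⟨fun p => φ p.1 p.2, (trLeft_outer_eq_sum _).trans (Finset.sum_congr rfl fun x _ => hφ x)⟩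

variable [Fintype n]

lemma trace_trLeft_outer_regEmbed (Q θ : m × n → ℝ) :
    (trLeft (outer (regEmbed Q θ))).trace = ((∑ p, √(Q p) ^ 2 : ℝ) : ℂ) := by
  have hweight (p : m × n) :
      regEmbed Q θ p * (starRingEnd ℂ) (regEmbed Q θ p) = ((√(Q p) ^ 2 : ℝ) : ℂ) := by
    rw [Complex.mul_conj, Complex.normSq_eq_norm_sq, regEmbed, norm_mul,
      Complex.norm_exp_ofReal_mul_I, one_mul, Complex.norm_real, Real.norm_eq_abs, sq_abs]
  simp only [trace, diag_apply, trLeft, outer, hweight, Complex.ofReal_sum]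
  rw [Fintype.sum_prod_type_right]

lemma bddBelow_range_regLeakage [DecidableEq n] (Q : m × n → ℝ) :
    BddBelow (Set.range (regLeakage Q)) := by
  refine ⟨Real.negMulLog (∑ p, √(Q p) ^ 2) / Real.log 2 - mutualInfo Q, ?_⟩
  rintro _ ⟨θ, rfl⟩
  have hle := negMulLog_trace_div_le_vonNeumannEntropy (posSemidef_trLeft_outer (regEmbed Q θ))
  rw [trace_trLeft_outer_regEmbed, Complex.ofReal_re] at hle
  exact sub_le_sub_right hle _

end PureStates

section Merging

variable {X Y U V : Type*}

lemma map_prodMap_apply [Fintype X] [Fintype Y] [Finite U] [Finite V] [DecidableEq U]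
    [DecidableEq V] (f : X → U) (g : Y → V) (P : X × Y → ℝ) (u : U) (v : V) :
    FunOnFinite.map (Prod.map f g) P (u, v) = ∑ y with g y = v, ∑ x with f x = u, P (x, y) := by
  simp only [FunOnFinite.map_apply_apply, Finset.sum_filter, Fintype.sum_prod_type_right,
    Prod.map_apply, Prod.mk.injEq]
  refine Finset.sum_congr rfl fun y _ => ?_
  split_ifs with h <;> simp [h]

lemma map_prodMap_id_apply [Fintype X] [Finite Y] [Finite U] [DecidableEq U] (f : X → U)
    (P : X × Y → ℝ) (u : U) (y : Y) :
    FunOnFinite.map (Prod.map f id) P (u, y) = ∑ x with f x = u, P (x, y) := by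
  classical
  have := Fintype.ofFinite Y
  rw [map_prodMap_apply, Finset.sum_filter]
  exact Fintype.sum_ite_eq' y fun y => ∑ x with f x = u, P (x, y)

lemma map_prodMap_id_apply_of_proportional [Fintype X] [Finite Y] [Finite U]
    [DecidableEq U] {P : X × Y → ℝ} {f : X → U} {a : X → ℝ} {k : U → Y → ℝ}
    (hP : ∀ x y, P (x, y) = a x * k (f x) y) (u : U) (y : Y) :
    FunOnFinite.map (Prod.map f id) P (u, y) = (∑ x with f x = u, a x) * k u y := by
  rw [map_prodMap_id_apply, Finset.sum_mul]
  refine Finset.sum_congr rfl fun x hx => ?_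
  rw [hP, (Finset.mem_filter.mp hx).2]

lemma map_prodMap_eq_comp_swap [Finite X] [Finite Y] [Finite U] [Finite V] (f : X → U)
    (g : Y → V) (P : X × Y → ℝ) :
    FunOnFinite.map (Prod.map f g) P = FunOnFinite.map (Prod.map g id)
      (FunOnFinite.map (Prod.map f id) P ∘ Prod.swap) ∘ Prod.swap := by
  classical
  have := Fintype.ofFinite X
  have := Fintype.ofFinite Y
  ext ⟨u, v⟩
  rw [map_prodMap_apply, Function.comp_apply, Prod.swap_prod_mk, map_prodMap_id_apply]
  simp only [Function.comp_apply, Prod.swap_prod_mk, map_prodMap_id_apply]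

variable [Fintype X] [Fintype U]

lemma margY_map_prodMap_id [Finite Y] (f : X → U) (P : X × Y → ℝ) :
    margY (FunOnFinite.map (Prod.map f id) P) = margY P := by
  classical
  ext y
  simp only [margY, map_prodMap_id_apply]
  exact Finset.sum_fiberwise _ f fun x => P (x, y)

lemma trLeft_outer_regEmbed_mem_convexHull [Finite Y] {P : X × Y → ℝ} {f : X → U}
    {a : X → ℝ} {k : U → Y → ℝ} (ha : 0 ≤ a) (hP : ∀ x y, P (x, y) = a x * k (f x) y)
    (θ : X × Y → ℝ) :
    trLeft (outer (regEmbed P θ)) ∈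
      convexHull ℝ (reducedStates (FunOnFinite.map (Prod.map f id) P)) := by
  classical
  let φ (x : X) (y : Y) : ℝ := θ (x, y)
  have hrow (u : U) : (fun y => FunOnFinite.map (Prod.map f id) P (u, y)) =
      (∑ x with f x = u, a x) • k u :=
    funext (map_prodMap_id_apply_of_proportional hP u)
  have hsum : trLeft (outer (regEmbed P θ)) =
      ∑ u, ∑ x with f x = u, outer (phaseVec (a x • k u) (φ x)) := by
    rw [trLeft_outer_eq_sum, ← Finset.sum_fiberwise _ f]
    refine Finset.sum_congr rfl fun u _ => Finset.sum_congr rfl fun x hx => ?_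
    have hPx : (fun y => P (x, y)) = a x • k u := by
      ext y
      rw [hP, (Finset.mem_filter.mp hx).2, Pi.smul_apply, smul_eq_mul]
    rw [← hPx]
    rfl
  rw [reducedStates_eq_sum_phaseStates, convexHull_sum, hsum]
  refine Set.finsetSum_mem_finsetSum _ _ _ fun u _ => ?_
  rw [hrow]
  exact sum_outer_phaseVec_smul_mem_convexHull (fun x _ => ha x) (k u) φ

variable [Fintype Y]

lemma shannonEntropy_sub_shannonEntropy_margX {P : X × Y → ℝ} {a : X → ℝ} {k : X → Y → ℝ}
    (hP : ∀ x y, P (x, y) = a x * k x y) :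
    shannonEntropy P - shannonEntropy (margX P) =
      ∑ x, a x * (shannonEntropy (k x) - Real.negMulLog (∑ y, k x y) / Real.log 2) := by
  have hmarg (x : X) : margX P x = a x * ∑ y, k x y := by simp only [margX, hP, Finset.mul_sum]
  simp only [shannonEntropy_eq_sum_negMulLog, Fintype.sum_prod_type, hmarg, hP,
    Real.negMulLog_mul, ← sub_div, ← Finset.sum_sub_distrib, mul_div_assoc', ← Finset.sum_div]
  congr 1
  refine Finset.sum_congr rfl fun x _ => ?_
  rw [Finset.sum_add_distrib, ← Finset.sum_mul, ← Finset.mul_sum]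
  ring

lemma mutualInfo_map_prodMap_id {P : X × Y → ℝ} {f : X → U} {a : X → ℝ} {k : U → Y → ℝ}
    (hP : ∀ x y, P (x, y) = a x * k (f x) y) :
    mutualInfo (FunOnFinite.map (Prod.map f id) P) = mutualInfo P := by
  classical
  set R := FunOnFinite.map (Prod.map f id) P with hR
  have hcond : shannonEntropy R - shannonEntropy (margX R) =
      shannonEntropy P - shannonEntropy (margX P) := by
    rw [shannonEntropy_sub_shannonEntropy_margX hP,
      shannonEntropy_sub_shannonEntropy_margX (map_prodMap_id_apply_of_proportional hP),
      ← Finset.sum_fiberwise _ f]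
    refine Finset.sum_congr rfl fun u _ => ?_
    rw [Finset.sum_mul]
    refine Finset.sum_congr rfl fun x hx => ?_
    rw [(Finset.mem_filter.mp hx).2]
  rw [mutualInfo, mutualInfo, hR, margY_map_prodMap_id, ← hR]
  linarith

lemma primLeakage_map_prodMap_id_le [DecidableEq Y] {P : X × Y → ℝ} {f : X → U} {a : X → ℝ}
    {k : U → Y → ℝ} (ha : 0 ≤ a) (hP : ∀ x y, P (x, y) = a x * k (f x) y) :
    primLeakage (FunOnFinite.map (Prod.map f id) P) ≤ primLeakage P := by
  refine le_ciInf fun θ => ?_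
  have hpos : reducedStates (FunOnFinite.map (Prod.map f id) P) ⊆ {A | A.PosSemidef} := by
    rintro _ ⟨θ', rfl⟩
    exact posSemidef_trLeft_outer _
  obtain ⟨_, ⟨θ', rfl⟩, hle⟩ := concaveOn_vonNeumannEntropy.exists_le_of_mem_convexHull hpos
    (trLeft_outer_regEmbed_mem_convexHull ha hP θ)
  calc primLeakage (FunOnFinite.map (Prod.map f id) P)
      ≤ regLeakage (FunOnFinite.map (Prod.map f id) P) θ' :=
        ciInf_le (bddBelow_range_regLeakage _) θ'
    _ ≤ regLeakage P θ := by
        rw [regLeakage, regLeakage, mutualInfo_map_prodMap_id hP]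
        exact sub_le_sub_right hle _

lemma mutualInfo_comp_swap (Q : X × Y → ℝ) : mutualInfo (Q ∘ Prod.swap) = mutualInfo Q := by
  have hjoint : shannonEntropy (Q ∘ Prod.swap) = shannonEntropy Q :=
    shannonEntropy_comp_equiv (Equiv.prodComm Y X) Q
  have hX : margX (Q ∘ Prod.swap) = margY Q := rfl
  have hY : margY (Q ∘ Prod.swap) = margX Q := rfl
  rw [mutualInfo, mutualInfo, hjoint, hX, hY, add_comm (shannonEntropy (margY Q))]

variable [DecidableEq Y]

lemma vonNeumannEntropy_trLeft_outer_comp_swap [DecidableEq X] (ψ : X × Y → ℂ) :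
    vonNeumannEntropy (trLeft (outer (ψ ∘ Prod.swap))) =
      vonNeumannEntropy (trLeft (outer ψ)) := by
  let M : Matrix Y X ℂ := of fun y x => ψ (x, y)
  have hswap : trLeft (outer (ψ ∘ Prod.swap)) = (Mᴴ * M)ᵀ := by
    ext i j
    simp [trLeft, outer, mul_apply, M, mul_comm]
  rw [hswap, vonNeumannEntropy_transpose (isHermitian_conjTranspose_mul_self M),
    vonNeumannEntropy_conjTranspose_mul_self, trLeft_outer_eq_mul_conjTranspose]

lemma primLeakage_comp_swap [DecidableEq X] (Q : X × Y → ℝ) :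
    primLeakage (Q ∘ Prod.swap) = primLeakage Q := by
  refine (Equiv.iInf_congr ((Equiv.prodComm Y X).arrowCongr (Equiv.refl ℝ)).symm fun θ => ?_).symm
  have hembed : regEmbed (Q ∘ Prod.swap)
      (((Equiv.prodComm Y X).arrowCongr (Equiv.refl ℝ)).symm θ) = regEmbed Q θ ∘ Prod.swap := rfl
  rw [regLeakage, regLeakage, hembed, mutualInfo_comp_swap,
    vonNeumannEntropy_trLeft_outer_comp_swap]

lemma primLeakage_map_prodMap_le [Fintype V] [DecidableEq V] {P : X × Y → ℝ} {f : X → U}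
    {g : Y → V} {a : X → ℝ} {b : Y → ℝ} {k : U → Y → ℝ} {l : V → X → ℝ} (ha : 0 ≤ a) (hb : 0 ≤ b)
    (hrow : ∀ x y, P (x, y) = a x * k (f x) y) (hcol : ∀ x y, P (x, y) = b y * l (g y) x) :
    primLeakage (FunOnFinite.map (Prod.map f g) P) ≤ primLeakage P := by
  classical
  let R := FunOnFinite.map (Prod.map f id) P
  have hR (y : Y) (u : U) : (R ∘ Prod.swap) (y, u) = b y * ∑ x with f x = u, l (g y) x := by
    simp only [R, Function.comp_apply, Prod.swap_prod_mk, map_prodMap_id_apply, hcol,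
      Finset.mul_sum]
  calc primLeakage (FunOnFinite.map (Prod.map f g) P)
      = primLeakage (FunOnFinite.map (Prod.map g id) (R ∘ Prod.swap)) := by
        rw [map_prodMap_eq_comp_swap, primLeakage_comp_swap]
    _ ≤ primLeakage (R ∘ Prod.swap) :=
        primLeakage_map_prodMap_id_le (k := fun v u => ∑ x with f x = u, l v x) hb hR
    _ = primLeakage R := primLeakage_comp_swap R
    _ ≤ primLeakage P := primLeakage_map_prodMap_id_le ha hrow

end Merging

section DependentParts

variable {X Y : Type*} {P : X × Y → ℝ}

/-- At a symbol of weight zero `condYX` takes the junk value `0 / 0 = 0`, and both sides vanish. -/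
lemma margX_mul_condYX [Fintype Y] (hP : 0 ≤ P) (x : X) (y : Y) :
    margX P x * condYX P x y = P (x, y) :=
  mul_div_cancel_of_imp' fun h =>
    (Finset.sum_eq_zero_iff_of_nonneg fun z _ => hP (x, z)).mp h y (Finset.mem_univ y)

lemma margY_mul_condXY [Fintype X] (hP : 0 ≤ P) (x : X) (y : Y) :
    margY P y * condXY P y x = P (x, y) :=
  margX_mul_condYX (P := P ∘ Prod.swap) (fun p => hP p.swap) y x

variable [Fintype X] [Fintype Y]

/-- The dependent part `X↘Y` as a map onto its image. -/
def depPartX (P : X × Y → ℝ) (x : X) : {u // u ∈ Finset.univ.image (condYX P)} :=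
  ⟨condYX P x, Finset.mem_image_of_mem _ (Finset.mem_univ x)⟩

/-- The dependent part `Y↘X` as a map onto its image. -/
def depPartY (P : X × Y → ℝ) (y : Y) : {v // v ∈ Finset.univ.image (condXY P)} :=
  ⟨condXY P y, Finset.mem_image_of_mem _ (Finset.mem_univ y)⟩

lemma depPartDist_eq_map (P : X × Y → ℝ) :
    depPartDist P = FunOnFinite.map (Prod.map (depPartX P) (depPartY P)) P := by
  ext q
  rw [FunOnFinite.map_apply_apply, depPartDist]
  simp only [Prod.ext_iff, Subtype.ext_iff, Prod.map_fst, Prod.map_snd, depPartX, depPartY]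

theorem primLeakage_ge_depPart_general [DecidableEq Y] (P : X × Y → ℝ) (hP : ∀ p, 0 ≤ P p) :
    primLeakage P ≥ primLeakage (depPartDist P) := by
  classical
  rw [depPartDist_eq_map]
  exact primLeakage_map_prodMap_le
    (a := margX P) (b := margY P) (k := fun u y => u.1 y) (l := fun v x => v.1 x)
    (fun x => Finset.sum_nonneg fun y _ => hP (x, y))
    (fun y => Finset.sum_nonneg fun x _ => hP (x, y))
    (fun x y => (margX_mul_condYX hP x y).symm) (fun x y => (margY_mul_condXY hP x y).symm)

end DependentParts

/-- `Δ_{P_{X,Y}} ≥ Δ_{P_{X↘Y, Y↘X}}`. -/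
theorem primLeakage_ge_depPart
    (P : 𝒳 × 𝒴 → ℝ) (hP0 : ∀ p, 0 ≤ P p) (hP1 : ∑ p, P p = 1) :
    primLeakage P ≥ primLeakage (depPartDist P) :=
  primLeakage_ge_depPart_general P hP0

end
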